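/- A skew-symmetric matrix A of size n×n over a field of characteristic zero has rank < 2k if and only if all Pfaffians of its principal 2k×2k submatrices vanish. -/

import Mathlib

open Matrix

/-- The even index `2i` in `Fin (2*n)`. -/
def evenIdx {n : ℕ} (i : Fin n) : Fin (2 * n) := ⟨2 * i.val, by have := i.isLt; omega⟩

/-- The odd index `2i+1` in `Fin (2*n)`. -/
def oddIdx {n : ℕ} (i : Fin n) : Fin (2 * n) := ⟨2 * i.val + 1, by have := i.isLt; omega⟩

/-- The Pfaffian of a `2n × 2n` matrix over a commutative ring, defined as the signed sum
over perfect matchings of `{0, …, 2n-1}` of the products of the corresponding entries. -/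
def pfaffian {R : Type*} [CommRing R] {n : ℕ} (A : Matrix (Fin (2 * n)) (Fin (2 * n)) R) : R :=
  ∑ σ ∈ Finset.univ.filter (fun σ : Equiv.Perm (Fin (2 * n)) =>
      (∀ i : Fin n, σ (evenIdx i) < σ (oddIdx i)) ∧
      ∀ i j : Fin n, i < j → σ (evenIdx i) < σ (evenIdx j)),
    (Equiv.Perm.sign σ : ℤ) • ∏ i : Fin n, A (σ (evenIdx i)) (σ (oddIdx i))


section HyperoctahedralGroup

variable {n : ℕ}

/-- The permutation of `Fin n × Fin 2` which permutes the blocks `{i} × Fin 2` by `h.1` and then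
permutes the elements inside of each block `i` by `h.2 i`. -/
def blockPerm (h : Equiv.Perm (Fin n) × (Fin n → Equiv.Perm (Fin 2))) :
    Equiv.Perm (Fin n × Fin 2) :=
  Equiv.prodCongrRight h.2 * Equiv.prodCongrLeft fun _ => h.1

lemma blockPerm_apply (h : Equiv.Perm (Fin n) × (Fin n → Equiv.Perm (Fin 2))) (i : Fin n)
    (b : Fin 2) : blockPerm h (i, b) = (h.1 i, h.2 (h.1 i) b) := rfl

lemma sign_blockPerm (h : Equiv.Perm (Fin n) × (Fin n → Equiv.Perm (Fin 2))) :
    Equiv.Perm.sign (blockPerm h) = ∏ i, Equiv.Perm.sign (h.2 i) := by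
  rw [blockPerm, Equiv.Perm.sign_mul, Equiv.Perm.sign_prodCongrRight,
    Equiv.Perm.sign_prodCongrLeft]
  simp

lemma perm_fin_two_existsUnique {L : Type*} [LinearOrder L] (t : Fin 2 → L)
    (ht : Function.Injective t) : ∃! ε : Equiv.Perm (Fin 2), t (ε 0) < t (ε 1) := by
  have h01 : t 0 ≠ t 1 := fun h => by simpa using ht h
  have key : ∀ ε : Equiv.Perm (Fin 2), ε = 1 ∨ ε = Equiv.swap 0 1 := by decide
  rcases lt_or_gt_of_ne h01 with h | h
  · refine ⟨1, by simpa using h, fun ε hε => ?_⟩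
    rcases key ε with rfl | rfl
    · rfl
    · simp at hε
      exact absurd h hε.not_gt
  · refine ⟨Equiv.swap 0 1, by simpa using h, fun ε hε => ?_⟩
    rcases key ε with rfl | rfl
    · simp at hε
      exact absurd h hε.not_gt
    · rfl

/-- The orderings of the pairs in a perfect matching, relative to an injective labelling `s`. -/
def IsNormalized {L : Type*} [LinearOrder L] (s : Fin n × Fin 2 → L) : Prop :=
  (∀ i, s (i, 0) < s (i, 1)) ∧ ∀ i j, i < j → s (i, 0) < s (j, 0)

lemma existsUnique_isNormalized_comp_blockPerm {L : Type*} [LinearOrder L]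
    (s : Fin n × Fin 2 → L) (hs : Function.Injective s) :
    ∃! h, IsNormalized (s ∘ blockPerm h) := by
  have hε (i : Fin n) : ∃! ε : Equiv.Perm (Fin 2), s (i, ε 0) < s (i, ε 1) :=
    perm_fin_two_existsUnique (fun b => s (i, b)) fun a b hab => by simpa using hs hab
  choose ε hε hεu using hε
  have hinj : Function.Injective fun i => s (i, ε i 0) := fun i j hij => by
    simpa using congrArg Prod.fst (hs hij)
  refine ⟨(Tuple.sort fun i => s (i, ε i 0), ε), ⟨fun i => hε _, fun i j hij => ?_⟩, ?_⟩
  · exact ((Tuple.monotone_sort fun i => s (i, ε i 0)).strictMono_of_injective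
      (hinj.comp (Equiv.injective _))) hij
  · rintro ⟨π, ε'⟩ ⟨h1, h2⟩
    obtain rfl : ε' = ε := by
      funext i
      apply hεu
      simpa [blockPerm_apply] using h1 (π.symm i)
    congr 1
    have hm : StrictMono ((fun i => s (i, ε' i 0)) ∘ π) := h2
    have := Tuple.unique_monotone hm.monotone (Tuple.monotone_sort fun i => s (i, ε' i 0))
    ext i
    exact congrArg Fin.val (hinj (congrFun this i))

lemma exists_eq_blockPerm (σ : Equiv.Perm (Fin n × Fin 2))
    (hσ : ∀ i, (σ (i, 0)).1 = (σ (i, 1)).1) : ∃ h, σ = blockPerm h := by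
  have h2 (b : Fin 2) (i : Fin n) : (σ (i, b)).1 = (σ (i, 0)).1 := by
    fin_cases b
    · rfl
    · exact (hσ i).symm
  have hsurj : Function.Surjective fun i => (σ (i, 0)).1 := fun j => by
    obtain ⟨⟨i, b⟩, hib⟩ := σ.surjective (j, 0)
    exact ⟨i, by simp only [← h2 b i, hib]⟩
  let π : Equiv.Perm (Fin n) :=
    Equiv.ofBijective _ (Finite.injective_iff_bijective.mp
      (Finite.injective_iff_surjective.mpr hsurj))
  have hπ (i : Fin n) : π i = (σ (i, 0)).1 := rfl
  have hinj (j : Fin n) : Function.Injective fun b => (σ (π.symm j, b)).2 := fun b c hbc => by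
    have : σ (π.symm j, b) = σ (π.symm j, c) := Prod.ext (by rw [h2 b, h2 c]) hbc
    simpa using σ.injective this
  let ε (j : Fin n) : Equiv.Perm (Fin 2) :=
    Equiv.ofBijective _ (Finite.injective_iff_bijective.mp (hinj j))
  refine ⟨(π, ε), Equiv.ext fun ⟨i, b⟩ => Prod.ext ?_ ?_⟩
  · rw [blockPerm_apply, hπ, h2]
  · simp [blockPerm_apply, ε]

end HyperoctahedralGroup

section PfaffianSum

variable {R : Type*} [CommRing R] {n : ℕ}

/-- The sum defining the Pfaffian, extended over all permutations of the index set
`Fin n × Fin 2`. -/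
def pfaffianSum (B : Matrix (Fin n × Fin 2) (Fin n × Fin 2) R) : R :=
  ∑ σ : Equiv.Perm (Fin n × Fin 2),
    (Equiv.Perm.sign σ : ℤ) • ∏ i : Fin n, B (σ (i, 0)) (σ (i, 1))

lemma apply_perm_fin_two {ι : Type*} {B : Matrix ι ι R} (hB : Bᵀ = -B) (t : Fin 2 → ι)
    (ε : Equiv.Perm (Fin 2)) :
    B (t (ε 0)) (t (ε 1)) = ((Equiv.Perm.sign ε : ℤ) : R) * B (t 0) (t 1) := by
  have key : ∀ ε : Equiv.Perm (Fin 2), ε = 1 ∨ ε = Equiv.swap 0 1 := by decide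
  rcases key ε with rfl | rfl
  · simp
  · have := congrFun (congrFun hB (t 0)) (t 1)
    simpa [Equiv.Perm.sign_swap] using this

lemma sign_smul_prod_mul_blockPerm {B : Matrix (Fin n × Fin 2) (Fin n × Fin 2) R}
    (hB : Bᵀ = -B) (σ : Equiv.Perm (Fin n × Fin 2))
    (h : Equiv.Perm (Fin n) × (Fin n → Equiv.Perm (Fin 2))) :
    (Equiv.Perm.sign (σ * blockPerm h) : ℤ) •
        ∏ i : Fin n, B ((σ * blockPerm h) (i, 0)) ((σ * blockPerm h) (i, 1)) =
      (Equiv.Perm.sign σ : ℤ) • ∏ i : Fin n, B (σ (i, 0)) (σ (i, 1)) := by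
  have hprod : ∏ i : Fin n, B ((σ * blockPerm h) (i, 0)) ((σ * blockPerm h) (i, 1)) =
      ((Equiv.Perm.sign (blockPerm h) : ℤ) : R) * ∏ i : Fin n, B (σ (i, 0)) (σ (i, 1)) := by
    simp only [Equiv.Perm.mul_apply, blockPerm_apply]
    rw [Equiv.prod_comp h.1 fun i => B (σ (i, h.2 i 0)) (σ (i, h.2 i 1)), sign_blockPerm]
    simp only [fun i => apply_perm_fin_two hB (fun b => σ (i, b)) (h.2 i),
      Finset.prod_mul_distrib, Units.coe_prod, Int.cast_prod]
  rw [hprod, Equiv.Perm.sign_mul, zsmul_eq_mul, zsmul_eq_mul, ← mul_assoc, ← Int.cast_mul,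
    Units.val_mul, mul_assoc, ← Units.val_mul, Int.units_mul_self, Units.val_one, mul_one]

/-- The identification of `(i, b)` with `2 * i + b`. -/
def pairEquiv (n : ℕ) : Fin n × Fin 2 ≃ Fin (2 * n) :=
  finProdFinEquiv.trans (finCongr (mul_comm n 2))

lemma pairEquiv_zero (i : Fin n) : pairEquiv n (i, 0) = evenIdx i := by
  ext; simp [pairEquiv, evenIdx]

lemma pairEquiv_one (i : Fin n) : pairEquiv n (i, 1) = oddIdx i := by
  ext; simp [pairEquiv, oddIdx, add_comm]

open Classical in
lemma pfaffian_eq_sum_isNormalized (B : Matrix (Fin (2 * n)) (Fin (2 * n)) R) :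
    pfaffian B = ∑ σ : Equiv.Perm (Fin n × Fin 2), if IsNormalized (pairEquiv n ∘ σ) then
      (Equiv.Perm.sign σ : ℤ) • ∏ i : Fin n,
        B (pairEquiv n (σ (i, 0))) (pairEquiv n (σ (i, 1))) else 0 := by
  rw [pfaffian, Finset.sum_filter]
  refine (Fintype.sum_equiv (pairEquiv n).permCongr _ _ fun σ => ?_).symm
  simp only [IsNormalized, Function.comp_apply, Equiv.permCongr_apply, ← pairEquiv_zero,
    ← pairEquiv_one, Equiv.symm_apply_apply, Equiv.Perm.sign_permCongr]
  congr

lemma pfaffianSum_submatrix_pairEquiv {B : Matrix (Fin (2 * n)) (Fin (2 * n)) R}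
    (hB : Bᵀ = -B) : pfaffianSum (B.submatrix (pairEquiv n) (pairEquiv n)) =
      Fintype.card (Equiv.Perm (Fin n) × (Fin n → Equiv.Perm (Fin 2))) • pfaffian B := by
  classical
  set C := B.submatrix (pairEquiv n) (pairEquiv n) with hC
  have hCskew : Cᵀ = -C := by rw [hC, transpose_submatrix, hB]; rfl
  set F : Equiv.Perm (Fin n × Fin 2) → R := fun σ =>
    (Equiv.Perm.sign σ : ℤ) • ∏ i : Fin n, C (σ (i, 0)) (σ (i, 1)) with hF
  have hpf : pfaffian B = ∑ σ : Equiv.Perm (Fin n × Fin 2),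
      if IsNormalized (pairEquiv n ∘ σ) then F σ else 0 :=
    pfaffian_eq_sum_isNormalized B
  calc pfaffianSum C = ∑ σ, F σ := rfl
    _ = ∑ σ : Equiv.Perm (Fin n × Fin 2), ∑ h,
        if IsNormalized ((pairEquiv n ∘ σ) ∘ blockPerm h) then F σ else 0 := by
      refine Finset.sum_congr rfl fun σ _ => ?_
      obtain ⟨h, hh, hu⟩ := existsUnique_isNormalized_comp_blockPerm (pairEquiv n ∘ σ)
        ((pairEquiv n).injective.comp σ.injective)
      rw [Finset.sum_eq_single h (fun h' _ hne => if_neg fun hn => hne (hu h' hn))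
        (fun hn => absurd (Finset.mem_univ h) hn), if_pos hh]
    _ = ∑ h, ∑ σ : Equiv.Perm (Fin n × Fin 2),
        if IsNormalized (pairEquiv n ∘ (σ * blockPerm h : Equiv.Perm _)) then
          F (σ * blockPerm h) else 0 := by
      rw [Finset.sum_comm]
      refine Finset.sum_congr rfl fun h _ => Finset.sum_congr rfl fun σ _ => ?_
      rw [hF]
      simp only [sign_smul_prod_mul_blockPerm hCskew]
      rfl
    _ = ∑ h : Equiv.Perm (Fin n) × (Fin n → Equiv.Perm (Fin 2)), pfaffian B := by
      refine Finset.sum_congr rfl fun h _ => ?_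
      rw [hpf]
      exact Equiv.sum_comp (Equiv.mulRight (blockPerm h))
        fun σ => if IsNormalized (pairEquiv n ∘ σ) then F σ else 0
    _ = _ := by rw [Finset.sum_const, Finset.card_univ]

lemma pfaffianSum_eq_zero_of_row_col (B : Matrix (Fin n × Fin 2) (Fin n × Fin 2) R)
    (p : Fin n × Fin 2) (hrow : ∀ q, B p q = 0) (hcol : ∀ q, B q p = 0) :
    pfaffianSum B = 0 := by
  refine Finset.sum_eq_zero fun σ _ => ?_
  obtain ⟨⟨i, b⟩, rfl⟩ := σ.surjective p
  rw [Finset.prod_eq_zero (Finset.mem_univ i), smul_zero]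
  fin_cases b
  · exact hrow _
  · exact hcol _

/-- The standard symplectic matrix, with blocks indexed by `Fin n`. -/
def symplecticMatrix (R : Type*) [CommRing R] (n : ℕ) :
    Matrix (Fin n × Fin 2) (Fin n × Fin 2) R :=
  of fun p q => if p.1 = q.1 then !![0, 1; -1, 0] p.2 q.2 else 0

lemma transpose_symplecticMatrix : (symplecticMatrix R n)ᵀ = -symplecticMatrix R n := by
  ext ⟨i, b⟩ ⟨j, c⟩
  by_cases h : i = j <;> fin_cases b <;> fin_cases c <;>
    simp [symplecticMatrix, h, eq_comm]

lemma pfaffianSum_symplecticMatrix_ne_zero [CharZero R] :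
    pfaffianSum (symplecticMatrix R n) ≠ 0 := by
  classical
  have hone : (Equiv.Perm.sign (1 : Equiv.Perm (Fin n × Fin 2)) : ℤ) •
      ∏ i : Fin n, symplecticMatrix R n ((1 : Equiv.Perm (Fin n × Fin 2)) (i, 0))
        ((1 : Equiv.Perm (Fin n × Fin 2)) (i, 1)) = 1 := by
    simp [symplecticMatrix]
  have hterm (σ : Equiv.Perm (Fin n × Fin 2)) : (Equiv.Perm.sign σ : ℤ) •
      ∏ i : Fin n, symplecticMatrix R n (σ (i, 0)) (σ (i, 1)) =
        if ∃ h, σ = blockPerm h then 1 else 0 := by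
    split_ifs with hσ
    · obtain ⟨h, rfl⟩ := hσ
      rw [← hone, ← sign_smul_prod_mul_blockPerm transpose_symplecticMatrix 1 h, one_mul]
    · have : ∃ i, (σ (i, 0)).1 ≠ (σ (i, 1)).1 := by
        by_contra! hall
        exact hσ (exists_eq_blockPerm σ hall)
      obtain ⟨i, hi⟩ := this
      rw [Finset.prod_eq_zero (Finset.mem_univ i), smul_zero]
      simp [symplecticMatrix, hi]
  have hmem : ∃ h, (1 : Equiv.Perm (Fin n × Fin 2)) = blockPerm h :=
    exists_eq_blockPerm 1 fun _ => rfl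
  rw [pfaffianSum, Finset.sum_congr rfl fun σ _ => hterm σ, Finset.sum_boole]
  exact Nat.cast_ne_zero.mpr (Finset.card_ne_zero_of_mem (Finset.mem_filter.mpr
    ⟨Finset.mem_univ _, hmem⟩))

lemma injective_of_det_submatrix_ne_zero {ι m : Type*} [Fintype m] [DecidableEq m]
    (P : Matrix ι m R) (g : m → ι) (h : (P.submatrix g id).det ≠ 0) :
    Function.Injective g := fun a b hab => by
  by_contra hne
  exact h (det_zero_of_row_eq hne (by ext q; simp [hab]))

variable {ι : Type*} [Fintype ι]

lemma pfaffianSum_transpose_mul_mul (A : Matrix ι ι R) (P : Matrix ι (Fin n × Fin 2) R) :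
    pfaffianSum (Pᵀ * A * P) = ∑ g : Fin n × Fin 2 → ι,
      (∏ i, A (g (i, 0)) (g (i, 1))) * (P.submatrix g id).det := by
  classical
  have hentry (p q : Fin n × Fin 2) :
      (Pᵀ * A * P) p q = ∑ t : Fin 2 → ι, A (t 0) (t 1) * (P (t 0) p * P (t 1) q) := by
    rw [← (finTwoArrowEquiv ι).symm.sum_comp, Fintype.sum_prod_type, Finset.sum_comm]
    simp only [mul_apply, Finset.sum_mul, transpose_apply, finTwoArrowEquiv_symm_apply,
      cons_val_zero, cons_val_one]
    exact Finset.sum_congr rfl fun b _ => Finset.sum_congr rfl fun a _ => by ring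
  have hprod (σ : Equiv.Perm (Fin n × Fin 2)) :
      ∏ i, (Pᵀ * A * P) (σ (i, 0)) (σ (i, 1)) = ∑ g : Fin n × Fin 2 → ι,
        (∏ i, A (g (i, 0)) (g (i, 1))) * ∏ p, P (g p) (σ p) := by
    simp only [hentry, Finset.prod_univ_sum, Fintype.piFinset_univ]
    rw [← (Equiv.curry (Fin n) (Fin 2) ι).sum_comp]
    refine Finset.sum_congr rfl fun g _ => ?_
    rw [Finset.prod_mul_distrib, Fintype.prod_prod_type]
    simp [Fin.prod_univ_two]
  simp only [pfaffianSum, hprod, Finset.smul_sum]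
  rw [Finset.sum_comm]
  refine Finset.sum_congr rfl fun g _ => ?_
  rw [← det_transpose, det_apply', Finset.mul_sum]
  refine Finset.sum_congr rfl fun σ _ => ?_
  simp only [zsmul_eq_mul, transpose_apply, submatrix_apply, id_eq]
  ring

lemma card_smul_pfaffianSum_transpose_mul_mul (A : Matrix ι ι R)
    (P : Matrix ι (Fin n × Fin 2) R) :
    Fintype.card (Equiv.Perm (Fin n × Fin 2)) • pfaffianSum (Pᵀ * A * P) =
      ∑ g : Fin n × Fin 2 → ι, (P.submatrix g id).det * pfaffianSum (A.submatrix g g) := by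
  classical
  have hσ (σ : Equiv.Perm (Fin n × Fin 2)) : pfaffianSum (Pᵀ * A * P) =
      ∑ g : Fin n × Fin 2 → ι, (P.submatrix g id).det *
        ((Equiv.Perm.sign σ : ℤ) • ∏ i, A (g (σ (i, 0))) (g (σ (i, 1)))) := by
    rw [pfaffianSum_transpose_mul_mul,
      ← Equiv.sum_comp (Equiv.arrowCongr σ.symm (Equiv.refl ι))]
    refine Finset.sum_congr rfl fun g _ => ?_
    have hg : σ.symm.arrowCongr (Equiv.refl ι) g = g ∘ σ := rfl
    have hdet : (P.submatrix (g ∘ σ) id).det =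
        (Equiv.Perm.sign σ : ℤ) * (P.submatrix g id).det := det_permute σ (P.submatrix g id)
    simp only [hg, hdet, zsmul_eq_mul, Function.comp_apply]
    ring
  simp only [pfaffianSum, Finset.mul_sum]
  rw [Finset.sum_comm, ← Finset.card_univ, ← Finset.sum_const]
  exact Finset.sum_congr rfl fun σ _ => hσ σ

end PfaffianSum

section Rank

variable {K : Type*} [Field K] {n : ℕ} {ι : Type*} [Fintype ι]

lemma pfaffianSum_submatrix_perm (B : Matrix (Fin n × Fin 2) (Fin n × Fin 2) K)
    (τ : Equiv.Perm (Fin n × Fin 2)) :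
    pfaffianSum (B.submatrix τ τ) = (Equiv.Perm.sign τ : ℤ) • pfaffianSum B := by
  rw [pfaffianSum, pfaffianSum, Finset.smul_sum]
  conv_rhs => rw [← Equiv.sum_comp (Equiv.mulLeft τ)]
  refine Finset.sum_congr rfl fun σ _ => ?_
  simp only [Equiv.coe_mulLeft, Equiv.Perm.sign_mul, smul_smul, Units.val_mul]
  rw [← mul_assoc, ← Units.val_mul, Int.units_mul_self, Units.val_one, one_mul]
  rfl

lemma pfaffianSum_eq_zero_of_det_eq_zero [CharZero K]
    {B : Matrix (Fin n × Fin 2) (Fin n × Fin 2) K} (hB : Bᵀ = -B) (hdet : B.det = 0) :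
    pfaffianSum B = 0 := by
  obtain ⟨v, hv, hBv⟩ := exists_mulVec_eq_zero_iff.mpr hdet
  obtain ⟨p, hp⟩ := Function.ne_iff.mp hv
  have hvB : v ᵥ* B = 0 := by
    rw [← mulVec_transpose, hB, neg_mulVec, hBv, neg_zero]
  set P := (1 : Matrix (Fin n × Fin 2) (Fin n × Fin 2) K).updateCol p v with hP
  have hPdet : P.det ≠ 0 := by
    have := cramer_apply (1 : Matrix (Fin n × Fin 2) (Fin n × Fin 2) K) v p
    rw [cramer_one] at this
    rw [hP, ← this]
    exact hp
  set C := Pᵀ * B * P with hC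
  have hPp : (fun q => P q p) = v := by ext q; simp [hP]
  have hcol (q : Fin n × Fin 2) : C q p = 0 := by
    have : C q p = ((Pᵀ) *ᵥ (B *ᵥ fun r => P r p)) q := by
      rw [mulVec_mulVec]; rfl
    rw [this, hPp, hBv, mulVec_zero, Pi.zero_apply]
  have hrow (q : Fin n × Fin 2) : C p q = 0 := by
    have : C p q = (((fun r => P r p) ᵥ* B) ᵥ* P) q := by
      rw [vecMul_vecMul, hC, mul_assoc]; rfl
    rw [this, hPp, hvB, zero_vecMul, Pi.zero_apply]
  have hBC : B = (P⁻¹)ᵀ * C * P⁻¹ := by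
    have hu : IsUnit P.det := hPdet.isUnit
    rw [hC, transpose_nonsing_inv]
    have hu' : IsUnit Pᵀ.det := by rwa [det_transpose]
    rw [mul_assoc, mul_nonsing_inv_cancel_right _ _ hu, nonsing_inv_mul_cancel_left _ _ hu']
  have hsum := card_smul_pfaffianSum_transpose_mul_mul C P⁻¹
  rw [← hBC, Finset.sum_eq_zero] at hsum
  · exact (smul_eq_zero.mp hsum).resolve_left Fintype.card_ne_zero
  · intro g _
    by_cases hg : ((P⁻¹).submatrix g id).det = 0
    · rw [hg, zero_mul]
    · obtain ⟨q, rfl⟩ := Finite.injective_iff_surjective.mp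
        (injective_of_det_submatrix_ne_zero _ g hg) p
      rw [pfaffianSum_eq_zero_of_row_col _ q (fun _ => hrow _) (fun _ => hcol _), mul_zero]

lemma Matrix.rank_add_le_rank_add_rank {m : Type*} [Fintype m] (A B : Matrix m ι K) :
    (A + B).rank ≤ A.rank + B.rank := by
  have hle : LinearMap.range (A + B).mulVecLin ≤
      LinearMap.range A.mulVecLin ⊔ LinearMap.range B.mulVecLin := by
    rintro _ ⟨x, rfl⟩
    rw [mulVecLin_add, LinearMap.add_apply]
    exact Submodule.add_mem_sup ⟨x, rfl⟩ ⟨x, rfl⟩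
  exact (Submodule.finrank_mono hle).trans (Submodule.finrank_add_le_finrank_add_finrank _ _)

lemma dotProduct_mulVec_swap {A : Matrix ι ι K} (hA : Aᵀ = -A) (x y : ι → K) :
    x ⬝ᵥ A *ᵥ y = -(y ⬝ᵥ A *ᵥ x) := by
  rw [dotProduct_mulVec, ← mulVec_transpose, hA, neg_mulVec, neg_dotProduct, dotProduct_comm]

lemma exists_dotProduct_mulVec_eq_symplecticMatrix [CharZero K] (k : ℕ) (A : Matrix ι ι K)
    (hA : Aᵀ = -A) (hk : 2 * k ≤ A.rank) :
    ∃ w : Fin k × Fin 2 → ι → K, ∀ p q, w p ⬝ᵥ A *ᵥ w q = symplecticMatrix K k p q := by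
  classical
  induction k generalizing A with
  | zero => exact ⟨fun p => p.1.elim0, fun p => p.1.elim0⟩
  | succ k ih =>
    have hA0 : A ≠ 0 := by
      rintro rfl
      rw [rank_zero] at hk
      omega
    obtain ⟨u, v, huv⟩ : ∃ u v : ι → K, u ⬝ᵥ A *ᵥ v = 1 := by
      obtain ⟨a, b, hab⟩ : ∃ a b, A a b ≠ 0 := by
        by_contra! h
        exact hA0 (Matrix.ext h)
      exact ⟨Pi.single a 1, Pi.single b (A a b)⁻¹, by simp [hab]⟩
    have hself (x : ι → K) : x ⬝ᵥ A *ᵥ x = 0 := self_eq_neg.mp (dotProduct_mulVec_swap hA x x)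
    have hvu : v ⬝ᵥ A *ᵥ u = -1 := by rw [dotProduct_mulVec_swap hA, huv]
    set A' := A + (vecMulVec (A *ᵥ v) (A *ᵥ u) + vecMulVec (-(A *ᵥ u)) (A *ᵥ v)) with hA'
    have hA'skew : A'ᵀ = -A' := by
      simp only [hA', transpose_add, hA, transpose_vecMulVec, neg_vecMulVec, transpose_neg]
      abel
    have hrank : A.rank ≤ A'.rank + (1 + 1) := by
      have hAA' : A = A' + (vecMulVec (-(A *ᵥ v)) (A *ᵥ u) + vecMulVec (A *ᵥ u) (A *ᵥ v)) := by
        simp only [hA', neg_vecMulVec]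
        abel
      conv_lhs => rw [hAA']
      exact (rank_add_le_rank_add_rank _ _).trans (add_le_add le_rfl
        ((rank_add_le_rank_add_rank _ _).trans
          (add_le_add (rank_vecMulVec_le _ _) (rank_vecMulVec_le _ _))))
    obtain ⟨w, hw⟩ := ih A' hA'skew (by omega)
    have hform (x y : ι → K) : x ⬝ᵥ A' *ᵥ y = x ⬝ᵥ A *ᵥ y +
        (x ⬝ᵥ A *ᵥ v) * (y ⬝ᵥ A *ᵥ u) - (x ⬝ᵥ A *ᵥ u) * (y ⬝ᵥ A *ᵥ v) := by
      simp only [hA', add_mulVec, dotProduct_add, vecMulVec_mulVec, neg_vecMulVec, neg_mulVec,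
        dotProduct_neg, op_smul_eq_smul, dotProduct_smul, smul_eq_mul]
      rw [dotProduct_comm (A *ᵥ u) y, dotProduct_comm (A *ᵥ v) y]
      ring
    let π (x : ι → K) : ι → K := x - (x ⬝ᵥ A *ᵥ v) • u + (x ⬝ᵥ A *ᵥ u) • v
    have hπu (x : ι → K) : π x ⬝ᵥ A *ᵥ u = 0 := by
      simp [π, add_dotProduct, sub_dotProduct, hself, hvu]
    have hπv (x : ι → K) : π x ⬝ᵥ A *ᵥ v = 0 := by
      simp [π, add_dotProduct, sub_dotProduct, hself, huv]
    have huπ (x : ι → K) : u ⬝ᵥ A *ᵥ π x = 0 := by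
      rw [dotProduct_mulVec_swap hA, hπu, neg_zero]
    have hvπ (x : ι → K) : v ⬝ᵥ A *ᵥ π x = 0 := by
      rw [dotProduct_mulVec_swap hA, hπv, neg_zero]
    have hππ (x y : ι → K) : π x ⬝ᵥ A *ᵥ π y = x ⬝ᵥ A' *ᵥ y := by
      have : π x ⬝ᵥ A *ᵥ π y = π x ⬝ᵥ A *ᵥ y := by
        conv_lhs => rw [show π y = y - (y ⬝ᵥ A *ᵥ v) • u + (y ⬝ᵥ A *ᵥ u) • v from rfl]
        simp [mulVec_add, mulVec_sub, mulVec_smul, hπu, hπv]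
      rw [this, hform]
      simp only [π, add_dotProduct, sub_dotProduct, smul_dotProduct, smul_eq_mul]
      rw [dotProduct_mulVec_swap hA u y, dotProduct_mulVec_swap hA v y]
      ring
    refine ⟨fun p => Fin.cases (![u, v] p.2) (fun i => π (w (i, p.2))) p.1, ?_⟩
    rintro ⟨i, b⟩ ⟨j, c⟩
    cases i using Fin.cases with
    | zero =>
      cases j using Fin.cases with
      | zero => fin_cases b <;> fin_cases c <;> simp [symplecticMatrix, hself, huv, hvu]
      | succ j => fin_cases b <;> simp [symplecticMatrix, huπ, hvπ, (Fin.succ_ne_zero j).symm]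
    | succ i =>
      cases j using Fin.cases with
      | zero => fin_cases c <;> simp [symplecticMatrix, hπu, hπv]
      | succ j => simp [hππ, hw, symplecticMatrix]

end Rank

theorem stmt4 {K : Type*} [Field K] [CharZero K] {n k : ℕ}
    (A : Matrix (Fin n) (Fin n) K) (hA : Aᵀ = -A) :
    A.rank < 2 * k ↔
      ∀ f : Fin (2 * k) → Fin n, StrictMono f → pfaffian (A.submatrix f f) = 0 := by
  have hskew {m : Type} (f : m → Fin n) : (A.submatrix f f)ᵀ = -A.submatrix f f := by
    rw [transpose_submatrix, hA]; rfl
  constructor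
  · intro hr f _
    have hdet : (A.submatrix (f ∘ pairEquiv k) (f ∘ pairEquiv k)).det = 0 := by
      by_contra hne
      have h1 := rank_of_det_ne_zero hne
      have h2 := A.rank_submatrix_le (f ∘ pairEquiv k) (f ∘ pairEquiv k)
      rw [h1, Fintype.card_prod, Fintype.card_fin, Fintype.card_fin] at h2
      omega
    have h0 := pfaffianSum_eq_zero_of_det_eq_zero (hskew (f ∘ pairEquiv k)) hdet
    rw [← submatrix_submatrix, pfaffianSum_submatrix_pairEquiv (hskew f)] at h0
    exact (smul_eq_zero.mp h0).resolve_left Fintype.card_ne_zero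
  · intro h
    by_contra! hr
    obtain ⟨w, hw⟩ := exists_dotProduct_mulVec_eq_symplecticMatrix k A hA hr
    have hP : (of w)ᵀᵀ * A * (of w)ᵀ = symplecticMatrix K k := by
      ext p q
      rw [← hw, Matrix.mul_assoc]
      rfl
    have hsum := card_smul_pfaffianSum_transpose_mul_mul A (of w)ᵀ
    rw [hP, Finset.sum_eq_zero] at hsum
    · exact (smul_ne_zero Fintype.card_ne_zero pfaffianSum_symplecticMatrix_ne_zero) hsum
    · intro g _
      by_cases hg : ((of w)ᵀ.submatrix g id).det = 0
      · rw [hg, zero_mul]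
      · have hinj := injective_of_det_submatrix_ne_zero _ g hg
        set s := Tuple.sort (g ∘ (pairEquiv k).symm)
        have hf : StrictMono ((g ∘ (pairEquiv k).symm) ∘ s) :=
          (Tuple.monotone_sort _).strictMono_of_injective
            ((hinj.comp (pairEquiv k).symm.injective).comp s.injective)
        have h0 := pfaffianSum_submatrix_pairEquiv
          (hskew ((g ∘ (pairEquiv k).symm) ∘ s))
        rw [h _ hf, smul_zero] at h0
        have hperm := pfaffianSum_submatrix_perm (A.submatrix g g)
          ((pairEquiv k).symm.permCongr s)
        have hfun : ((g ∘ (pairEquiv k).symm) ∘ s) ∘ pairEquiv k =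
            g ∘ (pairEquiv k).symm.permCongr s := by
          ext p
          simp [Equiv.permCongr_apply]
        rw [submatrix_submatrix, hfun, ← submatrix_submatrix, hperm] at h0
        rw [(smul_eq_zero.mp h0).resolve_left (Units.ne_zero _), mul_zero]
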